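/- If u is harmonic on a domain D ⊆ ℝ^m (m ≥ 2) and the closed ball of radius r centered at x is contained in D, then u(x) = (m/|B_r|) ∫_{B_r(x)} u(y) log(r/|x−y|) dy, where |B_r| is the volume of the ball of radius r. -/

import Mathlib

open MeasureTheory Metric Real

noncomputable def laplacian {m : ℕ} (u : EuclideanSpace ℝ (Fin m) → ℝ)
    (x : EuclideanSpace ℝ (Fin m)) : ℝ :=
  ∑ i : Fin m, fderiv ℝ (fun y => fderiv ℝ u y (EuclideanSpace.single i 1)) x
    (EuclideanSpace.single i 1)

def HarmonicOn {m : ℕ} (u : EuclideanSpace ℝ (Fin m) → ℝ)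
    (D : Set (EuclideanSpace ℝ (Fin m))) : Prop :=
  ContDiffOn ℝ 2 u D ∧ ∀ x ∈ D, laplacian u x = 0


namespace LogMean

noncomputable def W (r t : ℝ) : ℝ := max (Real.log (r / t)) 0

noncomputable def g (r t : ℝ) : ℝ := max (t * Real.log r - t * Real.log t) 0

lemma g_cont (r : ℝ) : Continuous (g r) := by
  unfold g
  exact ((continuous_id.mul continuous_const).sub Real.continuous_mul_log).max continuous_const

lemma mul_W {r t : ℝ} (hr : 0 < r) (ht : 0 ≤ t) : t * W r t = g r t := by
  rcases ht.eq_or_lt with rfl | ht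
  · simp [W, g]
  · unfold W g
    rw [mul_max_of_nonneg _ _ ht.le, Real.log_div hr.ne' ht.ne', mul_sub, mul_zero]

lemma W_zero {r t : ℝ} (hr : 0 < r) (ht : r ≤ t) : W r t = 0 := by
  unfold W
  apply max_eq_right
  exact Real.log_nonpos (div_nonneg hr.le (hr.le.trans ht)) ((div_le_one (hr.trans_le ht)).2 ht)

lemma g_zero {r t : ℝ} (hr : 0 < r) (ht : r ≤ t) : g r t = 0 := by
  rw [← mul_W hr (hr.le.trans ht), W_zero hr ht, mul_zero]

lemma W_eq {r t : ℝ} (h0 : 0 ≤ t) (ht : t ≤ r) : W r t = Real.log (r / t) := by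
  unfold W
  rcases h0.eq_or_lt with rfl | h0
  · simp
  · exact max_eq_left (Real.log_nonneg ((one_le_div h0).2 ht))

noncomputable def phi (r t : ℝ) : ℝ := ∫ s in r..t, g r s

lemma phi_deriv (r t : ℝ) : HasDerivAt (phi r) (g r t) t :=
  intervalIntegral.integral_hasDerivAt_right ((g_cont r).intervalIntegrable _ _)
    (g_cont r).stronglyMeasurable.stronglyMeasurableAtFilter (g_cont r).continuousAt

lemma phi_zero {r t : ℝ} (hr : 0 < r) (ht : r ≤ t) : phi r t = 0 := by
  unfold phi
  rw [intervalIntegral.integral_congr (g := fun _ => (0 : ℝ))]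
  · simp
  · intro s hs
    rw [Set.uIcc_of_le ht] at hs
    exact g_zero hr hs.1

lemma radial_int {r : ℝ} (hr : 0 < r) (m : ℕ) (hm : 2 ≤ m) :
    IntegrableOn (fun t : ℝ => t ^ (m - 1) • W r t) (Set.Ioi 0) ∧
    ∫ t in Set.Ioi (0 : ℝ), t ^ (m - 1) • W r t = r ^ m / (m : ℝ) ^ 2 := by
  obtain ⟨k, rfl⟩ : ∃ k, m = k + 2 := ⟨m - 2, by omega⟩
  have e : Set.EqOn (fun t : ℝ => t ^ (k + 2 - 1) • W r t) (fun t => t ^ k * g r t)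
      (Set.Ioi 0) := by
    intro t ht
    have ht : 0 < t := ht
    simp only [smul_eq_mul]
    rw [← mul_W hr ht.le, show k + 2 - 1 = k + 1 by omega]; ring
  have hc : Continuous (fun t => t ^ k * g r t) := (continuous_pow k).mul (g_cont r)
  have hsub : ∀ t ∈ Set.Ioi (0 : ℝ) \ Set.Ioc 0 r, t ^ k * g r t = 0 := by
    intro t ht
    have : r ≤ t := by
      by_contra h
      exact ht.2 ⟨ht.1, (not_le.1 h).le⟩
    rw [g_zero hr this, mul_zero]
  have hI : IntegrableOn (fun t => t ^ k * g r t) (Set.Ioc 0 r) :=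
    (hc.integrableOn_Icc (a := 0) (b := r)).mono_set Set.Ioc_subset_Icc_self
  refine ⟨?_, ?_⟩
  · rw [integrableOn_congr_fun e measurableSet_Ioi]
    exact hI.of_forall_sdiff_eq_zero measurableSet_Ioi hsub
  · rw [setIntegral_congr_fun measurableSet_Ioi e,
      setIntegral_eq_of_subset_of_forall_sdiff_eq_zero measurableSet_Ioi
        (fun t ht => ht.1) hsub, ← intervalIntegral.integral_of_le hr.le]
    have hn : ((k : ℝ) + 2) ≠ 0 := by positivity
    rw [intervalIntegral.integral_eq_sub_of_hasDerivAt_of_le (f := fun t : ℝ =>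
      t ^ (k + 1) * (t * Real.log r - t * Real.log t) / (k + 2) + t ^ (k + 2) / (k + 2) ^ 2) hr.le]
    · simp
    · apply Continuous.continuousOn
      have := Real.continuous_mul_log
      fun_prop
    · intro t ht
      have h1 := hasDerivAt_pow (k + 1) t
      have h2 := hasDerivAt_pow (k + 2) t
      have h3 := Real.hasDerivAt_log ht.1.ne'
      have h4 := ((h1.mul (((hasDerivAt_id t).mul_const (Real.log r)).sub
        ((hasDerivAt_id t).mul h3))).div_const ((k : ℝ) + 2)).add
          (h2.div_const (((k : ℝ) + 2) ^ 2))
      refine h4.congr_deriv ?_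
      have ht0 : t ≠ 0 := ht.1.ne'
      rw [← mul_W hr ht.1.le, W_eq ht.1.le ht.2.le, Real.log_div hr.ne' ht0]
      simp
      field_simp
      ring
    · exact hc.intervalIntegrable _ _

variable {m : ℕ}


lemma W_integrable {r : ℝ} (hr : 0 < r) (hm : 2 ≤ m) :
    Integrable (fun y : EuclideanSpace ℝ (Fin m) => W r ‖y‖) := by
  have : Nontrivial (EuclideanSpace ℝ (Fin m)) :=
    Module.nontrivial_of_finrank_pos (R := ℝ) (by simp; omega)
  rw [integrable_fun_norm_addHaar volume (f := W r)]
  simpa using (radial_int hr m hm).1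

lemma W_integral {r : ℝ} (hr : 0 < r) (hm : 2 ≤ m) (x : EuclideanSpace ℝ (Fin m)) :
    ∫ y : EuclideanSpace ℝ (Fin m), W r ‖y‖ = (volume (ball x r)).toReal / m := by
  have : Nontrivial (EuclideanSpace ℝ (Fin m)) :=
    Module.nontrivial_of_finrank_pos (R := ℝ) (by simp; omega)
  rw [integral_fun_norm_addHaar volume (W r), Measure.addHaar_ball _ _ hr.le]
  have := (radial_int hr m hm).2
  simp only [finrank_euclideanSpace, Fintype.card_fin]
  rw [this, ENNReal.toReal_mul, ENNReal.toReal_ofReal (by positivity)]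
  have : (m : ℝ) ≠ 0 := by positivity
  simp [Measure.real]
  field_simp

lemma Phi_deriv {r : ℝ} (hr : 0 < r) (y : EuclideanSpace ℝ (Fin m)) :
    HasFDerivAt (fun y : EuclideanSpace ℝ (Fin m) => phi r ‖y‖) (W r ‖y‖ • innerSL ℝ y) y := by
  by_cases hy : y = 0
  · subst hy
    have h := phi_deriv r 0
    have h0 : g r 0 = 0 := by simp [g]
    rw [h0, hasDerivAt_iff_isLittleO] at h
    rw [hasFDerivAt_iff_isLittleO]
    have ht : Filter.Tendsto (fun y : EuclideanSpace ℝ (Fin m) => ‖y‖) (nhds 0) (nhds 0) := by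
      simpa using (continuous_norm (E := EuclideanSpace ℝ (Fin m))).tendsto 0
    have := (h.comp_tendsto ht)
    simp only [Function.comp_def, sub_zero, smul_zero] at this
    simpa using this.of_norm_right
  · have h1 := (hasStrictFDerivAt_norm_sq y).hasFDerivAt
    have hn : ‖y‖ ≠ 0 := norm_ne_zero_iff.2 hy
    have h2 := h1.sqrt (by positivity)
    simp only [Real.sqrt_sq (norm_nonneg _)] at h2
    have h3 := (phi_deriv r ‖y‖).comp_hasFDerivAt y h2
    refine h3.congr_fderiv ?_
    rw [← mul_W hr (norm_nonneg y)]
    ext z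
    simp
    field_simp

lemma Phi_cont {r : ℝ} (hr : 0 < r) :
    Continuous (fun y : EuclideanSpace ℝ (Fin m) => phi r ‖y‖) :=
  continuous_iff_continuousAt.2 fun y => (Phi_deriv hr y).continuousAt

lemma Phi_supp {r : ℝ} (hr : 0 < r) :
    HasCompactSupport (fun y : EuclideanSpace ℝ (Fin m) => phi r ‖y‖) := by
  refine HasCompactSupport.intro (isCompact_closedBall 0 r) fun y hy => ?_
  have : r < ‖y‖ := by simpa using hy
  exact phi_zero hr this.le

lemma mul_W_integrable {r : ℝ} (hr : 0 < r) (hm : 2 ≤ m)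
    {f : EuclideanSpace ℝ (Fin m) → ℝ} (hf : Continuous f) :
    Integrable (fun y => f y * W r ‖y‖) := by
  have h := IntegrableOn.continuousOn_mul (hf.continuousOn (s := closedBall 0 r))
    (W_integrable hr hm).integrableOn (isCompact_closedBall 0 r)
  rw [← integrableOn_univ]
  refine h.of_forall_sdiff_eq_zero MeasurableSet.univ fun y hy => ?_
  have : r < ‖y‖ := by simpa using hy
  rw [W_zero hr this.le, mul_zero]

lemma fderiv_sum (L : EuclideanSpace ℝ (Fin m) →L[ℝ] ℝ) (y : EuclideanSpace ℝ (Fin m)) :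
    L y = ∑ i, L (EuclideanSpace.single i 1) * y i := by
  have h := (EuclideanSpace.basisFun (Fin m) ℝ).sum_repr y
  conv_lhs => rw [← h]
  simp [mul_comm]

lemma deriv_zero {r : ℝ} (hr : 0 < r) (hm : 2 ≤ m) {v : EuclideanSpace ℝ (Fin m) → ℝ}
    (hv : ContDiff ℝ 2 v) (x : EuclideanSpace ℝ (Fin m))
    (hlap : ∀ y ∈ closedBall x r, laplacian v y = 0) {s : ℝ} (h0 : 0 ≤ s) (h1 : s ≤ 1) :
    ∫ y, fderiv ℝ v (x + s • y) y * W r ‖y‖ = 0 := by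
  let e : Fin m → EuclideanSpace ℝ (Fin m) := fun i => EuclideanSpace.single i 1
  let q : Fin m → EuclideanSpace ℝ (Fin m) → ℝ := fun i z => fderiv ℝ v z (e i)
  have hq : ∀ i, ContDiff ℝ 1 (q i) := fun i =>
    (hv.fderiv_right (m := 1) (by norm_num)).clm_apply contDiff_const
  let p : Fin m → EuclideanSpace ℝ (Fin m) → ℝ := fun i y => q i (x + s • y)
  have hp : ∀ i, ContDiff ℝ 1 (p i) := fun i =>
    (hq i).comp (by fun_prop)
  have hpd : ∀ i y, fderiv ℝ (p i) y (e i) = s * fderiv ℝ (q i) (x + s • y) (e i) := by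
    intro i y
    have a1 : HasFDerivAt (fun y : EuclideanSpace ℝ (Fin m) => x + s • y)
      (s • ContinuousLinearMap.id ℝ (EuclideanSpace ℝ (Fin m))) y :=
      ((hasFDerivAt_id y).const_smul s).const_add x
    have a2 := ((hq i).differentiable (by norm_num) (x + s • y)).hasFDerivAt.comp y a1
    have := a2.fderiv
    change fderiv ℝ (p i) y = _ at this
    rw [this]; simp
  have hPhi : ∀ i y, fderiv ℝ (fun y : EuclideanSpace ℝ (Fin m) => phi r ‖y‖) y (e i)
      = y i * W r ‖y‖ := by
    intro i y
    rw [(Phi_deriv hr y).fderiv]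
    simp [e, EuclideanSpace.inner_single_right, mul_comm]
  have hpc : ∀ i, Continuous (fun y => fderiv ℝ (p i) y (e i)) := fun i =>
    ((hp i).continuous_fderiv (by norm_num)).clm_apply continuous_const
  have hint1 : ∀ i, Integrable (fun y => fderiv ℝ (p i) y (e i) * phi r ‖y‖) := fun i =>
    ((hpc i).mul (Phi_cont hr)).integrable_of_hasCompactSupport (Phi_supp hr).mul_left
  have hint2 : ∀ i, Integrable (fun y => p i y * (y i * W r ‖y‖)) := fun i => by
    have := mul_W_integrable hr hm (f := fun y => p i y * y i)
      ((hp i).continuous.mul (by fun_prop))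
    simpa only [mul_assoc] using this
  have ibp : ∀ i, ∫ y, p i y * (y i * W r ‖y‖) = - ∫ y, fderiv ℝ (p i) y (e i) * phi r ‖y‖ := by
    intro i
    have := integral_mul_fderiv_eq_neg_fderiv_mul_of_integrable (μ := volume) (f := p i)
      (g := fun y : EuclideanSpace ℝ (Fin m) => phi r ‖y‖) (v := e i) (hint1 i)
      (by simpa only [hPhi] using hint2 i)
      (((hp i).continuous.mul (Phi_cont hr)).integrable_of_hasCompactSupport (Phi_supp hr).mul_left)
      (fun y _ => (hp i).differentiable (by norm_num) y)
      (fun y _ => (Phi_deriv hr y).differentiableAt)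
    simpa only [hPhi] using this
  calc ∫ y, fderiv ℝ v (x + s • y) y * W r ‖y‖
      = ∫ y, ∑ i, p i y * (y i * W r ‖y‖) := by
        congr 1; ext y
        rw [fderiv_sum (fderiv ℝ v (x + s • y)) y, Finset.sum_mul]
        exact Finset.sum_congr rfl fun i _ => mul_assoc _ _ _
    _ = ∑ i, ∫ y, p i y * (y i * W r ‖y‖) := integral_finsetSum _ fun i _ => hint2 i
    _ = - ∑ i, ∫ y, fderiv ℝ (p i) y (e i) * phi r ‖y‖ := by
        rw [← Finset.sum_neg_distrib]; exact Finset.sum_congr rfl fun i _ => ibp i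
    _ = - ∫ y, ∑ i, fderiv ℝ (p i) y (e i) * phi r ‖y‖ := by
        rw [integral_finsetSum _ fun i _ => hint1 i]
    _ = - ∫ y : EuclideanSpace ℝ (Fin m), (0 : ℝ) := by
        congr 2; ext y
        by_cases hy : r ≤ ‖y‖
        · simp [phi_zero hr hy]
        · have hz : x + s • y ∈ closedBall x r := by
            simp [norm_smul, abs_of_nonneg h0]
            nlinarith [norm_nonneg y]
          have := hlap _ hz
          rw [← Finset.sum_mul]
          simp only [hpd]
          rw [← Finset.mul_sum]
          unfold laplacian at this
          simp only [q, e]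
          rw [this]; simp
    _ = 0 := by simp

lemma key {r : ℝ} (hr : 0 < r) (hm : 2 ≤ m) {v : EuclideanSpace ℝ (Fin m) → ℝ}
    (hv : ContDiff ℝ 2 v) (hc : HasCompactSupport v) (x : EuclideanSpace ℝ (Fin m))
    (hlap : ∀ y ∈ closedBall x r, laplacian v y = 0) :
    ∫ y, v (x + y) * W r ‖y‖ = v x * ∫ y : EuclideanSpace ℝ (Fin m), W r ‖y‖ := by
  let F : ℝ → EuclideanSpace ℝ (Fin m) → ℝ := fun s y => v (x + s • y) * W r ‖y‖
  have hcd : Continuous (fderiv ℝ v) := hv.continuous_fderiv (by norm_num)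
  obtain ⟨C, hC⟩ := hc.fderiv (𝕜 := ℝ) |>.exists_bound_of_continuous hcd
  have hvi : ∀ s, Integrable (F s) := fun s =>
    mul_W_integrable hr hm (f := fun y => v (x + s • y)) (by
      have := hv.continuous
      fun_prop)
  have hd : ∀ s, HasDerivAt (fun s => ∫ y, F s y)
      (∫ y, fderiv ℝ v (x + s • y) y * W r ‖y‖) s := by
    intro s
    refine (hasDerivAt_integral_of_dominated_loc_of_deriv_le (F := F)
      (F' := fun s y => fderiv ℝ v (x + s • y) y * W r ‖y‖)
      (bound := fun y => (C * r) * W r ‖y‖) Filter.univ_mem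
      (Filter.Eventually.of_forall fun s => (hvi s).aestronglyMeasurable) (hvi s)
      (mul_W_integrable hr hm (f := fun y => fderiv ℝ v (x + s • y) y) ?_).aestronglyMeasurable
      ?_ ((W_integrable hr hm).const_mul _) ?_).2
    · exact (hcd.comp (by fun_prop)).clm_apply continuous_id
    · refine Filter.Eventually.of_forall fun y s _ => ?_
      have hW : 0 ≤ W r ‖y‖ := le_max_right _ _
      rw [norm_mul, Real.norm_of_nonneg hW]
      by_cases hy : r ≤ ‖y‖
      · simp [W_zero hr hy]
      · refine mul_le_mul_of_nonneg_right ?_ hW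
        refine ((fderiv ℝ v (x + s • y)).le_opNorm y).trans ?_
        exact mul_le_mul (hC _) (not_le.1 hy).le (norm_nonneg _)
          ((norm_nonneg _).trans (hC (x + s • y)))
    · refine Filter.Eventually.of_forall fun y s _ => ?_
      have a1 : HasDerivAt (fun s : ℝ => x + s • y) y s := by
        simpa using ((hasDerivAt_id s).smul_const y).const_add x
      exact ((hv.differentiable (by norm_num) (x + s • y)).hasFDerivAt.comp_hasDerivAt s
        a1).mul_const _
  have := constant_of_has_deriv_right_zero (f := fun s => ∫ y, F s y) (a := 0) (b := 1)
    (fun s _ => (hd s).continuousAt.continuousWithinAt)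
    (fun s hs => by
      have := hd s
      rw [deriv_zero hr hm hv x hlap hs.1 hs.2.le] at this
      exact this.hasDerivWithinAt) 1 (by simp)
  simpa [F, integral_const_mul] using this

lemma cutoff {D : Set (EuclideanSpace ℝ (Fin m))} (hD : IsOpen D)
    {u : EuclideanSpace ℝ (Fin m) → ℝ} (hu : ContDiffOn ℝ 2 u D)
    {x : EuclideanSpace ℝ (Fin m)} {r : ℝ} (hr : 0 < r) (hball : closedBall x r ⊆ D) :
    ∃ v : EuclideanSpace ℝ (Fin m) → ℝ, ContDiff ℝ 2 v ∧ HasCompactSupport v ∧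
      ∀ y ∈ closedBall x r, v =ᶠ[nhds y] u := by
  obtain ⟨δ, hδ, hsub⟩ := (isCompact_closedBall x r).exists_cthickening_subset_open hD hball
  rw [cthickening_closedBall hδ.le hr.le] at hsub
  let b : ContDiffBump x := ⟨r + δ / 2, r + δ, by positivity, by linarith⟩
  refine ⟨fun y => b y * u y, ?_, b.hasCompactSupport.mul_right, ?_⟩
  · rw [contDiff_iff_contDiffAt]
    intro y
    by_cases hy : y ∈ D
    · exact b.contDiffAt.mul (hu.contDiffAt (hD.mem_nhds hy))
    · have hy' : y ∉ tsupport b := by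
        rw [b.tsupport_eq]
        intro h
        exact hy (hsub (by rw [add_comm]; exact h))
      have : (fun y => b y * u y) =ᶠ[nhds y] fun _ => 0 := by
        filter_upwards [notMem_tsupport_iff_eventuallyEq.1 hy'] with z hz
        simp [hz]
      exact contDiffAt_const.congr_of_eventuallyEq this
  · intro y hy
    have : y ∈ ball x b.rIn := by
      have : dist y x ≤ r := hy
      simp only [b, mem_ball]; linarith
    filter_upwards [b.eventuallyEq_one_of_mem_ball this] with z hz
    simp [hz]

lemma laplacian_congr {u v : EuclideanSpace ℝ (Fin m) → ℝ} {y : EuclideanSpace ℝ (Fin m)}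
    (h : v =ᶠ[nhds y] u) : laplacian v y = laplacian u y := by
  unfold laplacian
  refine Finset.sum_congr rfl fun i _ => ?_
  have : (fun y => fderiv ℝ v y (EuclideanSpace.single i 1)) =ᶠ[nhds y]
      (fun y => fderiv ℝ u y (EuclideanSpace.single i 1)) := by
    filter_upwards [h.fderiv (𝕜 := ℝ)] with z hz
    rw [hz]
  rw [this.fderiv_eq]

end LogMean

theorem stmt_1 (m : ℕ) (hm : 2 ≤ m) (D : Set (EuclideanSpace ℝ (Fin m)))
    (hDopen : IsOpen D) (hDconn : IsConnected D)
    (u : EuclideanSpace ℝ (Fin m) → ℝ) (hu : HarmonicOn u D)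
    (x : EuclideanSpace ℝ (Fin m)) (r : ℝ) (hr : 0 < r)
    (hball : closedBall x r ⊆ D) :
    u x = ((m : ℝ) / (volume (ball x r)).toReal)
        * ∫ y in ball x r, u y * Real.log (r / dist x y) := by
  obtain ⟨v, hv, hc, hvu⟩ := LogMean.cutoff hDopen hu.1 hr hball
  have hk := LogMean.key hr hm hv hc x fun y hy => by
    rw [LogMean.laplacian_congr (hvu y hy), hu.2 y (hball hy)]
  have hI : ∫ y in ball x r, u y * Real.log (r / dist x y)
      = ∫ y, v (x + y) * LogMean.W r ‖y‖ := by
    have h1 := integral_add_left_eq_self (μ := volume)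
      (fun z : EuclideanSpace ℝ (Fin m) => v z * LogMean.W r ‖z - x‖) x
    simp only [add_sub_cancel_left] at h1
    rw [h1, ← integral_indicator measurableSet_ball]
    congr 1; ext z
    by_cases hz : z ∈ ball x r
    · rw [Set.indicator_of_mem hz, (hvu z (ball_subset_closedBall hz)).eq_of_nhds,
        dist_comm, dist_eq_norm, LogMean.W_eq (norm_nonneg _)]
      rw [← dist_eq_norm]; exact (mem_ball.1 hz).le
    · rw [Set.indicator_of_notMem hz, LogMean.W_zero hr, mul_zero]
      rw [← dist_eq_norm]; simpa using hz
  rw [hI, hk, LogMean.W_integral hr hm x,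
    (hvu x (mem_closedBall_self hr.le)).eq_of_nhds]
  have h1 : (volume (ball x r)).toReal ≠ 0 :=
    (ENNReal.toReal_pos (measure_ball_pos volume x hr).ne' measure_ball_lt_top.ne).ne'
  have h2 : (m : ℝ) ≠ 0 := by positivity
  field_simp
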